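/- arXiv:1702.01677 — 2 statements merged into one kernel-verified Lean document; each statement's English description precedes it below -/
import Mathlib

section
/- For every β ∈ (0,1) and every ε ∈ (0,1), in the task graph G(β,ε) the cost configuration c̃ that assigns extra cost ε to every edge (v_i,w) with 1 ≤ i ≤ 2m (and 0 to all other edges) is motivating for the reward (1+ε)/β; under c̃ the agent follows the main path v_1,…,v_{2m+1}. -/
/-!
At a main-path node `v_i` with `i ≤ 2m` the agent compares the main edge with the shortcut. From
every `v_j` the target is reached at cost at most `ε + 1/β` (enter `w` at once, or be at `t`
already), so the main edge has perceived cost at most `(1-β)ε² + β(ε + 1/β) = 1 + βε + (1-β)ε²`,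
which is strictly below `1 + ε` because `ε < 1`. From `w` the target costs at least `1/β`, so the
shortcut has perceived cost at least `ε + β/β = 1 + ε`. Hence the main edge is the unique greedy
edge, and its perceived cost is below `β r = 1 + ε`, so the agent never gives up. Only these
one-sided bounds on distances are needed, not their exact values.
-/

/-!
Framework: task graphs, present-biased agents, perceived costs, greedy walks,
motivating rewards, cost configurations and subgraphs
(Kleinberg–Oren model, following Albers–Kraft).
-/

variable {V : Type} [Fintype V] [DecidableEq V]

/-- The list of (directed) edges traversed by a walk given as a list of vertices. -/
def walkEdges (p : List V) : List (V × V) := p.zip p.tail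

/-- `p` is a walk in the edge set `E`: consecutive vertices are joined by edges. -/
def IsWalk (E : Finset (V × V)) (p : List V) : Prop :=
  List.Chain' (fun u v : V => (u, v) ∈ E) p

/-- `p` is a walk in `E` from `a` to `b`. -/
def IsWalkFrom (E : Finset (V × V)) (p : List V) (a b : V) : Prop :=
  IsWalk E p ∧ p.head? = some a ∧ p.getLast? = some b

/-- There is a walk in `E` from `a` to `b`. -/
def Reaches (E : Finset (V × V)) (a b : V) : Prop :=
  ∃ p : List V, IsWalkFrom E p a b

/-- Total cost of a walk. -/
noncomputable def walkCost (c : V × V → ℝ) (p : List V) : ℝ :=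
  ((walkEdges p).map c).sum

/-- A task graph: a finite DAG with source `s`, target `t`, nonnegative edge
costs, in which every node lies on some directed path from `s` to `t`. -/
structure TaskGraph (V : Type) [Fintype V] [DecidableEq V] where
  E : Finset (V × V)
  s : V
  t : V
  c : V × V → ℝ
  c_nonneg : ∀ e ∈ E, 0 ≤ c e
  acyclic : ∀ p : List V, IsWalk E p → p.Nodup
  onPath : ∀ v : V, ∃ p : List V, IsWalkFrom E p s t ∧ v ∈ p

/-- `dcost E c t v` : cost of a cheapest walk from `v` to `t` in `E` w.r.t. costs `c`. -/
noncomputable def dcost (E : Finset (V × V)) (c : V × V → ℝ) (t v : V) : ℝ :=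
  sInf (walkCost c '' {p : List V | IsWalkFrom E p v t})

/-- Perceived cost `η(v,w) = c(v,w) + β d(w)` of an edge for a `β`-present-biased agent. -/
noncomputable def etaCost (E : Finset (V × V)) (c : V × V → ℝ) (t : V) (β : ℝ)
    (e : V × V) : ℝ :=
  c e + β * dcost E c t e.2

/-- Lowest perceived cost `ζ(v)`: the infimum of `η(v,w)` over edges `(v,w) ∈ E`
whose head `w` admits a continuation to `t` (i.e. over the agent's possible plans). -/
noncomputable def zetaCost (E : Finset (V × V)) (c : V × V → ℝ) (t : V) (β : ℝ)
    (v : V) : ℝ :=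
  sInf {x : ℝ | ∃ w : V, (v, w) ∈ E ∧ Reaches E w t ∧ etaCost E c t β (v, w) = x}

/-- One step of the agent's greedy walk for reward `r`: she traverses only
edges realizing the lowest perceived cost, and only if `ζ(v) ≤ β r`. -/
def GreedyStep (E : Finset (V × V)) (c : V × V → ℝ) (t : V) (β r : ℝ) (v w : V) : Prop :=
  v ≠ t ∧ (v, w) ∈ E ∧ Reaches E w t ∧
    etaCost E c t β (v, w) = zetaCost E c t β v ∧ zetaCost E c t β v ≤ β * r

/-- Nodes the agent may visit on some greedy walk from `s`. -/
inductive AgentReach (E : Finset (V × V)) (c : V × V → ℝ) (s t : V) (β r : ℝ) : V → Prop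
  | start : AgentReach E c s t β r s
  | step {v w : V} : AgentReach E c s t β r v → GreedyStep E c t β r v w →
      AgentReach E c s t β r w

/-- The task graph (with edge set `E`, costs `c`) is motivating for reward `r`:
at every node the agent may reach, she neither abandons nor gets stuck,
i.e. she can always perform a greedy step (hence, the graph being a finite DAG,
she reaches `t` on every greedy walk). -/
def Motivating (E : Finset (V × V)) (c : V × V → ℝ) (s t : V) (β r : ℝ) : Prop :=
  ∀ v : V, AgentReach E c s t β r v → v ≠ t → ∃ w : V, GreedyStep E c t β r v w

/-- A complete greedy walk of the agent from `s` to `t`. -/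
def AgentWalk (E : Finset (V × V)) (c : V × V → ℝ) (s t : V) (β r : ℝ) (p : List V) : Prop :=
  IsWalkFrom E p s t ∧ List.Chain' (GreedyStep E c t β r) p

/-- An initial segment of a greedy walk of the agent starting at `s`. -/
def GreedyPrefix (E : Finset (V × V)) (c : V × V → ℝ) (s t : V) (β r : ℝ) (p : List V) : Prop :=
  p.head? = some s ∧ List.Chain' (GreedyStep E c t β r) p

/-- A cost configuration: nonnegative extra costs on the edges. -/
def CostConfig (c' : V × V → ℝ) : Prop := ∀ e : V × V, 0 ≤ c' e

/-- The modified costs obtained by applying a cost configuration to `G`. -/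
noncomputable def addc (G : TaskGraph V) (c' : V × V → ℝ) : V × V → ℝ :=
  fun e => G.c e + c' e

/-- The cost configuration `c'` is motivating for reward `r` on `G`. -/
def MotivatingConfig (G : TaskGraph V) (β r : ℝ) (c' : V × V → ℝ) : Prop :=
  Motivating G.E (addc G c') G.s G.t β r

/-- The subgraph of `G` with edge set `E'` (retaining an `s`–`t` path) is
motivating for reward `r`; all quantities are computed within the subgraph. -/
def MotivatingSubgraph (G : TaskGraph V) (β r : ℝ) (E' : Finset (V × V)) : Prop :=
  E' ⊆ G.E ∧ (∃ p : List V, IsWalkFrom E' p G.s G.t) ∧ Motivating E' G.c G.s G.t β r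

theorem isWalk_singleton (E : Finset (V × V)) (a : V) : IsWalk E [a] :=
  List.isChain_singleton a

theorem isWalk_cons_cons {E : Finset (V × V)} {a b : V} {p : List V} :
    IsWalk E (a :: b :: p) ↔ (a, b) ∈ E ∧ IsWalk E (b :: p) :=
  List.isChain_cons_cons

theorem walkCost_nonneg {E : Finset (V × V)} {c : V × V → ℝ} (hc : ∀ e ∈ E, 0 ≤ c e) :
    ∀ p : List V, IsWalk E p → 0 ≤ walkCost c p
  | [], _ => by simp [walkCost, walkEdges]
  | [a], _ => by simp [walkCost, walkEdges]
  | a :: b :: p, h => by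
    have h' := isWalk_cons_cons.1 h
    have ih := walkCost_nonneg hc (b :: p) h'.2
    have hab := hc _ h'.1
    simp only [walkCost, walkEdges, List.tail_cons, List.zip_cons_cons, List.map_cons,
      List.sum_cons] at ih ⊢
    linarith

/-- Any walk to `t` bounds the distance from above; nonnegativity of the costs makes the infimum
defining `dcost` a genuine one. -/
theorem dcost_le_walkCost {E : Finset (V × V)} {c : V × V → ℝ} (hc : ∀ e ∈ E, 0 ≤ c e)
    {t v : V} {p : List V} (hp : IsWalkFrom E p v t) : dcost E c t v ≤ walkCost c p := by
  refine csInf_le ⟨0, ?_⟩ ⟨p, hp, rfl⟩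
  rintro _ ⟨q, hq, rfl⟩
  exact walkCost_nonneg hc q hq.1

/-- If all edges leaving `v ≠ t` cost at least `x`, then so does every walk from `v` to `t`. -/
theorem le_dcost {E : Finset (V × V)} {c : V × V → ℝ} (hc : ∀ e ∈ E, 0 ≤ c e)
    {t v : V} (hvt : v ≠ t) (hr : Reaches E v t) {x : ℝ} (hx : ∀ b, (v, b) ∈ E → x ≤ c (v, b)) :
    x ≤ dcost E c t v := by
  obtain ⟨p, hp⟩ := hr
  refine le_csInf ⟨_, p, hp, rfl⟩ ?_
  rintro _ ⟨q, ⟨hw, hh, hl⟩, rfl⟩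
  match q, hw, hh, hl with
  | [], _, hh, _ => simp at hh
  | [a], _, hh, hl =>
    simp only [List.head?_cons, List.getLast?_singleton, Option.some.injEq] at hh hl
    exact absurd (hh.symm.trans hl) hvt
  | a :: b :: q, hw, hh, _ =>
    obtain rfl : a = v := by simpa using hh
    have h' := isWalk_cons_cons.1 hw
    have h1 := walkCost_nonneg hc _ h'.2
    have h2 := hx b h'.1
    simp only [walkCost, walkEdges, List.tail_cons, List.zip_cons_cons, List.map_cons,
      List.sum_cons] at h1 ⊢
    linarith

/-- For all `β, ε ∈ (0,1)`, in the task graph `G(β,ε)` the cost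
configuration assigning extra cost `ε` to every shortcut edge `(v_i, w)` (and `0`
elsewhere) is motivating for the reward `(1+ε)/β`, and under it the agent follows
the main path `v_1, …, v_{2m+1}` (she never visits `w`).
Nodes: `some i` is `v_{i+1}`, `none` is `w`. -/
theorem stmt_4 (β ε : ℝ) (hβ0 : 0 < β) (hβ1 : β < 1) (hε0 : 0 < ε) (hε1 : ε < 1)
    (m : ℕ) (hm : m = ⌈1 / (β ^ 2 * (1 - β) * ε ^ 2)⌉₊)
    (G : TaskGraph (Option (Fin (2 * m + 1))))
    (hs : G.s = some ⟨0, by omega⟩) (ht : G.t = some ⟨2 * m, by omega⟩)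
    (hE : ∀ a b : Option (Fin (2 * m + 1)), (a, b) ∈ G.E ↔
      ((∃ i j : Fin (2 * m + 1), a = some i ∧ b = some j ∧ (j : ℕ) = (i : ℕ) + 1) ∨
       (∃ i : Fin (2 * m + 1), (i : ℕ) < 2 * m ∧ a = some i ∧ b = none) ∨
       (a = none ∧ b = some ⟨2 * m, by omega⟩)))
    (hc1 : ∀ i j : Fin (2 * m + 1), G.c (some i, some j) = (1 - β) * ε ^ 2)
    (hc2 : ∀ i : Fin (2 * m + 1), G.c (some i, none) = 0)
    (hc3 : ∀ j : Fin (2 * m + 1), G.c (none, some j) = 1 / β)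
    (c' : Option (Fin (2 * m + 1)) × Option (Fin (2 * m + 1)) → ℝ)
    (hc'def : c' = fun e => if e.2 = none ∧ e.1 ≠ none then ε else 0) :
    MotivatingConfig G β ((1 + ε) / β) c' ∧
      ∀ v, AgentReach G.E (addc G c') G.s G.t β ((1 + ε) / β) v → v ≠ none := by
  have hβne : β ≠ 0 := hβ0.ne'
  have hinv : 0 < 1 / β := by positivity
  have hmul : β * (1 / β) = 1 := by field_simp
  have hc : ∀ e ∈ G.E, 0 ≤ addc G c' e := by
    intro e he
    have h1 := G.c_nonneg e he
    simp only [addc, hc'def]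
    split_ifs <;> linarith
  have hmain : ∀ i j, addc G c' (some i, some j) = (1 - β) * ε ^ 2 := by
    intro i j; simp [addc, hc'def, hc1]
  have hshort : ∀ i, addc G c' (some i, none) = ε := by
    intro i; simp [addc, hc'def, hc2]
  have hlast : ∀ j, addc G c' (none, some j) = 1 / β := by
    intro j; simp [addc, hc'def, hc3]
  have hnt : (none, G.t) ∈ G.E := by
    rw [hE, ht]; exact Or.inr (Or.inr ⟨rfl, rfl⟩)
  have hin : ∀ i : Fin (2 * m + 1), (i : ℕ) < 2 * m → (some i, none) ∈ G.E := fun i hi =>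
    (hE _ _).2 (Or.inr (Or.inl ⟨i, hi, rfl, rfl⟩))
  have hwalk_none : IsWalkFrom G.E [none, G.t] none G.t := by
    simp [IsWalkFrom, isWalk_cons_cons, isWalk_singleton, hnt]
  have hd_none : 1 / β ≤ dcost G.E (addc G c') G.t none := by
    refine le_dcost hc (by simp [ht]) ⟨_, hwalk_none⟩ ?_
    intro b hb
    rcases (hE _ _).1 hb with ⟨i, j, h, -⟩ | ⟨i, -, h, -⟩ | ⟨-, h⟩
    · simp at h
    · simp at h
    · rw [h, hlast]
  have hd_some : ∀ j : Fin (2 * m + 1), Reaches G.E (some j) G.t ∧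
      dcost G.E (addc G c') G.t (some j) ≤ ε + 1 / β := by
    intro j
    by_cases hj : (j : ℕ) < 2 * m
    · have hw : IsWalkFrom G.E [some j, none, G.t] (some j) G.t := by
        simp [IsWalkFrom, isWalk_cons_cons, isWalk_singleton, hnt, hin j hj]
      refine ⟨⟨_, hw⟩, (dcost_le_walkCost hc hw).trans ?_⟩
      simp [walkCost, walkEdges, hshort, ht, hlast]
    · have hjt : G.t = some j := by
        rw [ht]; congr 1; ext; simp; omega
      have hw : IsWalkFrom G.E [some j] (some j) G.t := by
        simp [IsWalkFrom, isWalk_singleton, hjt]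
      refine ⟨⟨_, hw⟩, (dcost_le_walkCost hc hw).trans ?_⟩
      simp only [walkCost, walkEdges, List.tail_cons, List.zip_nil_right, List.map_nil,
        List.sum_nil]
      positivity
  have heta_main : ∀ i j : Fin (2 * m + 1),
      etaCost G.E (addc G c') G.t β (some i, some j) < 1 + ε := by
    intro i j
    have h1 := mul_le_mul_of_nonneg_left (hd_some j).2 hβ0.le
    rw [mul_add, hmul] at h1
    have h2 : 0 < (1 - β) * (ε * (1 - ε)) :=
      mul_pos (by linarith) (mul_pos hε0 (by linarith))
    simp only [etaCost, hmain]
    nlinarith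
  have heta_short : ∀ i : Fin (2 * m + 1),
      1 + ε ≤ etaCost G.E (addc G c') G.t β (some i, none) := by
    intro i
    have h1 := mul_le_mul_of_nonneg_left hd_none hβ0.le
    rw [hmul] at h1
    simp only [etaCost, hshort]
    linarith
  have hzeta : ∀ i j : Fin (2 * m + 1), (j : ℕ) = i + 1 →
      zetaCost G.E (addc G c') G.t β (some i)
        = etaCost G.E (addc G c') G.t β (some i, some j) := by
    intro i j hij
    refine IsLeast.csInf_eq
      ⟨⟨some j, (hE _ _).2 (Or.inl ⟨i, j, rfl, rfl, hij⟩), (hd_some j).1, rfl⟩, ?_⟩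
    rintro _ ⟨w, hw, -, rfl⟩
    cases w with
    | none => exact (heta_main i j).le.trans (heta_short i)
    | some k =>
      obtain rfl : k = j := by
        rcases (hE _ _).1 hw with ⟨a, b, ha, hb, hab⟩ | ⟨_, _, _, h⟩ | ⟨h, _⟩
        · simp only [Option.some.injEq] at ha hb
          subst ha hb
          ext; omega
        · simp at h
        · simp at h
      exact le_rfl
  have hlt : ∀ i : Fin (2 * m + 1), some i ≠ G.t → (i : ℕ) + 1 < 2 * m + 1 := by
    intro i hi
    have h : (i : ℕ) ≠ 2 * m := fun h => hi (by rw [ht]; congr 1; ext; exact h)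
    omega
  have hreach : ∀ v, AgentReach G.E (addc G c') G.s G.t β ((1 + ε) / β) v → v ≠ none := by
    intro v hv
    induction hv with
    | start => simp [hs]
    | @step v w _ hst ih =>
      rintro rfl
      obtain ⟨i, rfl⟩ := Option.ne_none_iff_exists'.1 ih
      obtain ⟨hvt, -, -, heq, -⟩ := hst
      rw [hzeta i ⟨i + 1, hlt i hvt⟩ rfl] at heq
      exact absurd heq ((heta_main _ _).trans_le (heta_short i)).ne'
  refine ⟨?_, hreach⟩
  intro v hv hvt
  obtain ⟨i, rfl⟩ := Option.ne_none_iff_exists'.1 (hreach v hv)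
  have hz := hzeta i ⟨i + 1, hlt i hvt⟩ rfl
  refine ⟨some ⟨i + 1, hlt i hvt⟩, hvt, (hE _ _).2 (Or.inl ⟨_, _, rfl, rfl, rfl⟩),
    (hd_some _).1, hz.symm, ?_⟩
  rw [hz, mul_div_cancel₀ _ hβne]
  exact (heta_main _ _).le
end

section
/- Let G be a task graph with present bias β ∈ (0,1], let P = v_1,…,v_m (s = v_1, t = v_m, m ≥ 3) be a path from s to t, let ε > 0, and let c̃ be the PathAndFence cost configuration for (P,ε). Then for every 1 ≤ i < m and every edge (v_i,w) with w ≠ v_{i+1} one has η_c̃(v_i,w) ≥ η_c̃(v_i,v_{i+1}) + βε/(m−2). Consequently, at every node of P the edge along P is the unique minimizer of perceived cost, and the agent's only possible greedy walk under c̃ starting at s follows P. -/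
/-!
The extra cost on a fenced edge `(v_i, w)` is at least the deficit
`η(v_i, v_{i+1}) - η(v_i, w) + βε/(m-2)`, so adding it lifts the perceived cost of that edge to
at least `η(v_i, v_{i+1}) + βε/(m-2)`; this is the inequality. As the gap is positive and the path
edge is itself an admissible plan (its head reaches `t` along the rest of the path), the minimal
perceived cost `ζ(v_i)` is at most `η(v_i, v_{i+1})` and no other edge attains it. A greedy step
from a node of the path is therefore forced (`greedyStep_eq`), no greedy step leaves `t`, and a
chain of forced steps starting at `s` is a prefix of the path (`isPrefix_of_forced`).
-/

/-!
Framework: task graphs, present-biased agents, perceived costs, greedy walks,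
motivating rewards, cost configurations and subgraphs
(Kleinberg–Oren model, following Albers–Kraft).
-/

variable {V : Type} [Fintype V] [DecidableEq V]

/-- The PathAndFence cost configuration for the path `p = v_1, …, v_m` and the
value `ε`: it charges nothing on edges of `p`, on edges not leaving a node of `p`
and on edges leaving `t = v_m`; on each edge `(v_i, w)` with `w ≠ v_{i+1}` it
charges `max {0, η(v_i, v_{i+1}) − η(v_i, w) + βε/(m−2)}`, where (the graph being
acyclic) the perceived costs `η` may be evaluated with the final configuration. -/
def IsPathAndFence (G : TaskGraph V) (β ε : ℝ) (p : List V) (c' : V × V → ℝ) : Prop :=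
  (∀ e ∈ walkEdges p, c' e = 0) ∧
  (∀ v w : V, v ∉ p → c' (v, w) = 0) ∧
  (∀ w : V, c' (G.t, w) = 0) ∧
  (∀ e : V × V, e ∉ G.E → c' e = 0) ∧
  (∀ (i : ℕ) (h : i + 1 < p.length) (w : V),
      (p.get ⟨i, by omega⟩, w) ∈ G.E → w ≠ p.get ⟨i + 1, h⟩ →
      c' (p.get ⟨i, by omega⟩, w) =
        max 0 (etaCost G.E (addc G c') G.t β (p.get ⟨i, by omega⟩, p.get ⟨i + 1, h⟩)
          - (G.c (p.get ⟨i, by omega⟩, w) + β * dcost G.E (addc G c') G.t w)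
          + β * ε / ((p.length : ℝ) - 2)))

/-- If every `R`-step from a non-last entry of `p` leads to the next entry, and no `R`-step leaves
the last entry, then an `R`-chain with the same head as `p` is a prefix of `p`. -/
lemma isPrefix_of_forced {α : Type} {R : α → α → Prop} {t : α} (ht : ∀ w, ¬ R t w) :
    ∀ (q p : List α) (a : α), q.head? = some a → p.head? = some a → p.getLast? = some t →
      (∀ (i : ℕ) (h : i + 1 < p.length) (w : α), R p[i] w → w = p[i + 1]) →
      q.IsChain R → q <+: p
  | [], _, _, _, _, _, _, _ => List.nil_prefix
  | _ :: _, [], _, _, hp, _, _, _ => by simp at hp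
  | [x], y :: p, a, hq, hp, _, _, _ => by simp_all
  | x :: x' :: q, [y], a, hq, hp, hl, _, hc => by
      simp only [List.head?_cons, Option.some.injEq, List.getLast?_singleton] at hq hp hl
      rw [List.isChain_cons_cons] at hc
      subst hq hl hp
      exact absurd hc.1 (ht _)
  | x :: x' :: q, y :: y' :: p, a, hq, hp, hl, hf, hc => by
      simp only [List.head?_cons, Option.some.injEq] at hq hp
      rw [List.isChain_cons_cons] at hc
      subst hq
      subst hp
      have hx : x' = y' := hf 0 (by simp) x' hc.1
      subst hx
      rw [List.prefix_cons_inj]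
      refine isPrefix_of_forced ht (x' :: q) (x' :: p) x' rfl rfl (by simpa using hl) ?_ hc.2
      intro i h w hw
      exact hf (i + 1) (by simpa using h) w hw

/-- Each non-last node of a walk to `t` has a successor on the walk which is an admissible plan:
it is joined by an edge and it reaches `t`. -/
lemma edge_and_reaches_of_walk {E : Finset (V × V)} {p : List V} {a t : V}
    (hp : IsWalkFrom E p a t) (i : ℕ) (h : i + 1 < p.length) :
    (p[i], p[i + 1]) ∈ E ∧ Reaches E p[i + 1] t := by
  obtain ⟨hw, -, hl⟩ := hp
  refine ⟨List.isChain_iff_getElem.1 hw i h, p.drop (i + 1), List.IsChain.drop hw _, ?_, ?_⟩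
  · rw [List.head?_drop, List.getElem?_eq_getElem h]
  · rw [List.getLast?_drop, if_neg (by omega), hl]

/-- The infimum defining `ζ(v)` ranges over a finite set, so it is a lower bound for the perceived
cost of each admissible edge. -/
lemma zetaCost_le {E : Finset (V × V)} {c : V × V → ℝ} {t : V} {β : ℝ} {v w : V}
    (he : (v, w) ∈ E) (hr : Reaches E w t) :
    zetaCost E c t β v ≤ etaCost E c t β (v, w) := by
  refine csInf_le (Set.Finite.bddBelow ?_) ⟨w, he, hr, rfl⟩
  refine (Set.finite_range fun w : V => etaCost E c t β (v, w)).subset ?_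
  rintro x ⟨u, -, -, rfl⟩
  exact ⟨u, rfl⟩

/-- If an admissible edge `(v, u)` is strictly cheaper in perceived cost than all other edges
leaving `v`, then a greedy step from `v` leads to `u`. -/
lemma greedyStep_eq {E : Finset (V × V)} {c : V × V → ℝ} {t : V} {β r : ℝ} {u v w : V}
    (he : (v, u) ∈ E) (hr : Reaches E u t)
    (hu : ∀ x, (v, x) ∈ E → x ≠ u → etaCost E c t β (v, u) < etaCost E c t β (v, x))
    (hs : GreedyStep E c t β r v w) : w = u := by
  obtain ⟨-, hw, -, heq, -⟩ := hs
  by_contra hne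
  exact (hu w hw hne).not_ge (heq.le.trans (zetaCost_le he hr))

/-- Let `p = v_1, …, v_m` (`s = v_1`, `t = v_m`, `m ≥ 3`) be a path
from `s` to `t`, `ε > 0`, and `c'` the PathAndFence configuration for `(p, ε)`.
Then for every `1 ≤ i < m` and edge `(v_i, w)` with `w ≠ v_{i+1}` one has
`η_{c'}(v_i, w) ≥ η_{c'}(v_i, v_{i+1}) + βε/(m−2)`; consequently the edge along `p`
is the unique perceived-cost minimizer at every node of `p`, and every greedy walk
of the agent starting at `s` (for any reward) follows `p`. -/
theorem stmt_6 (G : TaskGraph V) (β : ℝ) (hβ0 : 0 < β) (hβ1 : β ≤ 1)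
    (p : List V) (hp : IsWalkFrom G.E p G.s G.t) (hlen : 3 ≤ p.length)
    (ε : ℝ) (hε : 0 < ε) (c' : V × V → ℝ)
    (hpf : IsPathAndFence G β ε p c') :
    (∀ (i : ℕ) (h : i + 1 < p.length) (w : V),
        (p.get ⟨i, by omega⟩, w) ∈ G.E → w ≠ p.get ⟨i + 1, h⟩ →
        etaCost G.E (addc G c') G.t β (p.get ⟨i, by omega⟩, p.get ⟨i + 1, h⟩)
            + β * ε / ((p.length : ℝ) - 2)
          ≤ etaCost G.E (addc G c') G.t β (p.get ⟨i, by omega⟩, w)) ∧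
      ∀ (r : ℝ) (q : List V), GreedyPrefix G.E (addc G c') G.s G.t β r q → q <+: p := by
  have hm : (3 : ℝ) ≤ p.length := by exact_mod_cast hlen
  have hgap : 0 < β * ε / ((p.length : ℝ) - 2) := div_pos (mul_pos hβ0 hε) (by linarith)
  have key : ∀ (i : ℕ) (h : i + 1 < p.length) (w : V),
      (p.get ⟨i, by omega⟩, w) ∈ G.E → w ≠ p.get ⟨i + 1, h⟩ →
      etaCost G.E (addc G c') G.t β (p.get ⟨i, by omega⟩, p.get ⟨i + 1, h⟩)
          + β * ε / ((p.length : ℝ) - 2)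
        ≤ etaCost G.E (addc G c') G.t β (p.get ⟨i, by omega⟩, w) := by
    intro i h w hw hne
    have hc := (le_max_right _ _).trans_eq (hpf.2.2.2.2 i h w hw hne).symm
    have hη : etaCost G.E (addc G c') G.t β (p.get ⟨i, by omega⟩, w) =
        G.c (p.get ⟨i, by omega⟩, w) + c' (p.get ⟨i, by omega⟩, w)
          + β * dcost G.E (addc G c') G.t w := rfl
    linarith
  refine ⟨key, fun r q hq => ?_⟩
  refine isPrefix_of_forced (fun w hw => hw.1 rfl) q p G.s hq.1 hp.2.1 hp.2.2 ?_ hq.2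
  intro i h w hw
  obtain ⟨he, hr⟩ := edge_and_reaches_of_walk hp i h
  refine greedyStep_eq he hr (fun x hx hne => ?_) hw
  exact (lt_add_of_pos_right _ hgap).trans_le (key i h x hx hne)
end
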